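/- Let σ₁, σ₂, σ₃ be the Pauli matrices and γ₁ = (iσ₂) ⊗ σ₁, γ₂ = (iσ₂) ⊗ σ₂, γ₃ = (iσ₂) ⊗ σ₃, γ₄ = (iσ₁) ⊗ I₂ be 4×4 complex matrices (Kronecker products). Let β₁, β₂, c be real with c ≠ 0, set a = β₁·γ₁γ₂ + β₂·γ₃γ₄, and suppose (β₁ + β₂)² = c² or (β₁ − β₂)² = c². Then: (i) if β₁β₂ ≠ 0, the kernel of a − i·c·I₄ is a 1-dimensional complex subspace of ℂ⁴; (ii) if β₂ = 0 and β₁² = c², the kernel of a − i·c·I₄ is 2-dimensional. -/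

import Mathlib

open Matrix Complex
open scoped Kronecker

noncomputable section

/-- Pauli matrix σ₁. -/
def σ1 : Matrix (Fin 2) (Fin 2) ℂ := !![0, 1; 1, 0]
/-- Pauli matrix σ₂. -/
def σ2 : Matrix (Fin 2) (Fin 2) ℂ := !![0, -I; I, 0]
/-- Pauli matrix σ₃. -/
def σ3 : Matrix (Fin 2) (Fin 2) ℂ := !![1, 0; 0, -1]

/-- γ₁ = (iσ₂) ⊗ σ₁. -/
def γ1 : Matrix (Fin 2 × Fin 2) (Fin 2 × Fin 2) ℂ := (I • σ2) ⊗ₖ σ1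
/-- γ₂ = (iσ₂) ⊗ σ₂. -/
def γ2 : Matrix (Fin 2 × Fin 2) (Fin 2 × Fin 2) ℂ := (I • σ2) ⊗ₖ σ2
/-- γ₃ = (iσ₂) ⊗ σ₃. -/
def γ3 : Matrix (Fin 2 × Fin 2) (Fin 2 × Fin 2) ℂ := (I • σ2) ⊗ₖ σ3
/-- γ₄ = (iσ₁) ⊗ I₂. -/
def γ4 : Matrix (Fin 2 × Fin 2) (Fin 2 × Fin 2) ℂ := (I • σ1) ⊗ₖ (1 : Matrix (Fin 2) (Fin 2) ℂ)

/-!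
In this representation `γ₁γ₂ = -i(1 ⊗ σ₃)` and `γ₃γ₄ = i(σ₃ ⊗ σ₃)` are both diagonal, so the
eigenvalues of `a` are the two opposite pairs `±i(β₁ - β₂)` and `±i(β₁ + β₂)`. As `c ≠ 0`, a pair
contains `ic` at most once, and does so exactly when its square is `-c²`. The squares of the two
pairs differ by `4β₁β₂`, so both pairs contribute to the kernel if `β₁β₂ = 0`, and only one if not.
-/

lemma finrank_ker_mulVecLin_diagonal {K ι : Type*} [Field K] [DecidableEq K] [Fintype ι]
    [DecidableEq ι] (w : ι → K) :
    Module.finrank K (LinearMap.ker (diagonal w).mulVecLin) = Finset.card {i | w i = 0} := by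
  have rank_nullity := (diagonal w).mulVecLin.finrank_range_add_finrank_ker
  have card_split := Finset.univ.card_filter_add_card_filter_not fun i ↦ w i = 0
  rw [← Matrix.rank, rank_diagonal, Fintype.card_subtype, Module.finrank_fintype_fun_eq_card,
    ← Finset.card_univ, ← card_split, add_comm] at rank_nullity
  exact Nat.add_right_cancel rank_nullity

lemma sum_ite_sign_mul_eq {R : Type*} [CommRing R] [IsDomain R] [NeZero (2 : R)] [DecidableEq R]
    {c : R} (hc : c ≠ 0) (x : R) :
    ∑ j, (if (![1, -1] : Fin 2 → R) j * x = c then 1 else 0) = if x ^ 2 = c ^ 2 then 1 else 0 := by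
  have not_both (h : x = c) : -x ≠ c := fun h' ↦
    mul_ne_zero two_ne_zero hc (by linear_combination -h - h')
  simp only [Fin.sum_univ_two, cons_val_zero, cons_val_one, one_mul, neg_one_mul,
    sq_eq_sq_iff_eq_or_eq_neg, ← neg_eq_iff_eq_neg]
  by_cases hx : x = c
  · simp only [if_pos hx, if_neg (not_both hx), if_pos (Or.inl hx)]
  · simp only [hx, if_false, false_or, zero_add]

lemma σ1_mul_σ2 : σ1 * σ2 = I • σ3 := by simp [σ1, σ2, σ3]

lemma σ2_mul_σ1 : σ2 * σ1 = -I • σ3 := by simp [σ1, σ2, σ3]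

lemma σ2_mul_self : σ2 * σ2 = 1 := by simp [σ2, one_fin_two]

lemma σ3_eq_diagonal : σ3 = diagonal ![1, -1] := by
  rw [σ3, diagonal_fin_two, cons_val_zero, cons_val_one, cons_val_fin_one]

lemma γ1_mul_γ2 : γ1 * γ2 = -I • (1 ⊗ₖ σ3) := by
  rw [γ1, γ2, ← mul_kronecker_mul, smul_mul_smul_comm, σ2_mul_self, σ1_mul_σ2, smul_kronecker,
    kronecker_smul, smul_smul, I_mul_I, neg_one_mul]

lemma γ3_mul_γ4 : γ3 * γ4 = I • (σ3 ⊗ₖ σ3) := by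
  rw [γ3, γ4, ← mul_kronecker_mul, smul_mul_smul_comm, σ2_mul_σ1, mul_one, smul_smul,
    smul_kronecker, I_mul_I, neg_one_mul, neg_neg]

/-- The matrix `a = β₁γ₁γ₂ + β₂γ₃γ₄` by which the infinitesimal rotation `β₁R₁₂ + β₂R₃₄` acts on
spinors, up to normalization; the coefficients are allowed to be complex. -/
def spinGenerator (β₁ β₂ : ℂ) : Matrix (Fin 2 × Fin 2) (Fin 2 × Fin 2) ℂ :=
  β₁ • (γ1 * γ2) + β₂ • (γ3 * γ4)

lemma spinGenerator_eq_diagonal (β₁ β₂ : ℂ) :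
    spinGenerator β₁ β₂ = diagonal fun p ↦ I * (![1, -1] p.2 * (![1, -1] p.1 * β₂ - β₁)) := by
  rw [spinGenerator, γ1_mul_γ2, γ3_mul_γ4, σ3_eq_diagonal, ← diagonal_one,
    diagonal_kronecker_diagonal, diagonal_kronecker_diagonal]
  simp only [← diagonal_smul, diagonal_add, Pi.smul_apply, smul_eq_mul]
  congr 1 with p
  ring

lemma finrank_ker_spinGenerator_sub (β₁ β₂ : ℂ) {c : ℂ} (hc : c ≠ 0) :
    Module.finrank ℂ (LinearMap.ker (spinGenerator β₁ β₂ - (I * c) • 1).mulVecLin) =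
      (if (β₁ - β₂) ^ 2 = c ^ 2 then 1 else 0) + (if (β₁ + β₂) ^ 2 = c ^ 2 then 1 else 0) := by
  have sq_minus : (1 * β₂ - β₁) ^ 2 = (β₁ - β₂) ^ 2 := by ring
  have sq_plus : (-1 * β₂ - β₁) ^ 2 = (β₁ + β₂) ^ 2 := by ring
  rw [spinGenerator_eq_diagonal, smul_one_eq_diagonal, diagonal_sub,
    finrank_ker_mulVecLin_diagonal, Finset.card_filter, Fintype.sum_prod_type]
  simp only [sub_eq_zero, mul_right_inj' I_ne_zero, sum_ite_sign_mul_eq hc,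
    Fin.sum_univ_two, cons_val_zero, cons_val_one, sq_minus, sq_plus]

theorem stmt_2_general (β₁ β₂ c : ℂ) (hc : c ≠ 0)
    (hsusy : (β₁ + β₂) ^ 2 = c ^ 2 ∨ (β₁ - β₂) ^ 2 = c ^ 2) :
    Module.finrank ℂ
        (LinearMap.ker (β₁ • (γ1 * γ2) + β₂ • (γ3 * γ4) - (I * c) • 1).mulVecLin) =
      if β₁ * β₂ = 0 then 2 else 1 := by
  have sq_add_eq : (β₁ + β₂) ^ 2 = (β₁ - β₂) ^ 2 + 4 * (β₁ * β₂) := by ring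
  rw [← spinGenerator, finrank_ker_spinGenerator_sub β₁ β₂ hc]
  by_cases hβ : β₁ * β₂ = 0
  · have sq_eq : (β₁ + β₂) ^ 2 = (β₁ - β₂) ^ 2 := by rw [sq_add_eq, hβ, mul_zero, add_zero]
    rw [sq_eq, or_self] at hsusy
    rw [sq_eq, if_pos hsusy, if_pos hβ]
  · have sq_ne : (β₁ + β₂) ^ 2 ≠ (β₁ - β₂) ^ 2 := by simpa [sq_add_eq] using hβ
    rcases hsusy with hplus | hminus
    · rw [if_neg (hplus ▸ sq_ne.symm), if_pos hplus, if_neg hβ]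
    · rw [if_pos hminus, if_neg (hminus ▸ sq_ne), if_neg hβ]

/-- Dimension of the kernel of `a − icI₄` with `a = β₁ γ₁γ₂ + β₂ γ₃γ₄`, when
`(β₁ ± β₂)² = c²`: it is 1-dimensional if `β₁β₂ ≠ 0` and 2-dimensional if `β₂ = 0`
and `β₁² = c²`. -/
theorem stmt_2 (β₁ β₂ c : ℝ) (hc : c ≠ 0)
    (hsusy : (β₁ + β₂) ^ 2 = c ^ 2 ∨ (β₁ - β₂) ^ 2 = c ^ 2) :
    (β₁ * β₂ ≠ 0 →
      Module.finrank ℂ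
        (LinearMap.ker ((β₁ : ℂ) • (γ1 * γ2) + (β₂ : ℂ) • (γ3 * γ4)
          - (I * c) • 1).mulVecLin) = 1) ∧
    (β₂ = 0 → β₁ ^ 2 = c ^ 2 →
      Module.finrank ℂ
        (LinearMap.ker ((β₁ : ℂ) • (γ1 * γ2) + (β₂ : ℂ) • (γ3 * γ4)
          - (I * c) • 1).mulVecLin) = 2) := by
  have hfinrank := stmt_2_general β₁ β₂ c (mod_cast hc) (mod_cast hsusy)
  exact ⟨fun hβ ↦ hfinrank.trans (if_neg (mod_cast hβ)),
    fun hβ₂ _ ↦ hfinrank.trans (if_pos (by rw [hβ₂, ofReal_zero, mul_zero]))⟩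

end
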